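/- Let T be a monoidal triangulated category with a compatible bounded t-structure t, and let K be a left triangulated module category over T with a bounded t-structure t′ such that the module product bifunctor is compatible with t and t′ (H_t ⊗ H_{t′} ⊆ H_{t′}). Then for every X ∈ T, M ∈ K and every integer n there is a natural isomorphism (Künneth formula) H^n_{t′}(X ⊗ M) ≅ ⊕_{p+q=n} H^p_t(X) ⊗ H^q_{t′}(M), where H^p_t and H^q_{t′} are the cohomological functors of t and t′. -/

import Mathlib

/-!
STATEMENT 10: Künneth formula. Let `T` be a monoidal triangulated category with a
compatible bounded t-structure `t`, and `K` a left triangulated module category over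
`T` with a bounded t-structure `t'`, such that the module product bifunctor is
compatible with `t` and `t'` (`H_t ⊗ H_{t'} ⊆ H_{t'}`). Then for all `X ∈ T`,
`M ∈ K` and `n ∈ ℤ`,
`H^n_{t'}(X ⊗ M) ≅ ⊕_{p+q=n} H^p_t(X) ⊗ H^q_{t'}(M)`.

Since the t-structures are bounded, only finitely many summands are nonzero; the
(finite) coproduct is encoded by a finite set `S` of pairs `(p, q)` with `p + q = n`
outside of which the summands vanish, together with an isomorphism of
`H^n_{t'}(X ⊗ M)` with the biproduct indexed by `S`. Cohomology objects
`H^n_t(A) = (τ_{≤n} τ_{≥n} A)⟦n⟧` are encoded via chosen truncations.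
-/

open CategoryTheory Category Limits Pretriangulated MonoidalCategory ZeroObject
open CategoryTheory.Triangulated

namespace DerivedModule

/-- A left module category structure on `M` over a monoidal category `C`:
a module product bifunctor together with coherent associativity and unit
isomorphisms (pentagon and triangle axioms). -/
structure ModuleStruct (C : Type*) [Category C] [MonoidalCategory C]
    (M : Type*) [Category M] where
  /-- the module product bifunctor `⊗ : C × M → M` -/
  act : C ⥤ M ⥤ M
  /-- the associativity isomorphism `(X ⊗ Y) ⊗ m ≅ X ⊗ (Y ⊗ m)` -/
  assocIso (X Y : C) : act.obj (X ⊗ Y) ≅ act.obj Y ⋙ act.obj X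
  /-- the unit isomorphism `𝟙 ⊗ m ≅ m` -/
  unitIso : act.obj (𝟙_ C) ≅ 𝟭 M
  assoc_natural : ∀ {X X' Y Y' : C} (f : X ⟶ X') (g : Y ⟶ Y') (m : M),
    (act.map (f ⊗ₘ g)).app m ≫ (assocIso X' Y').hom.app m =
      (assocIso X Y).hom.app m ≫ (act.map f).app ((act.obj Y).obj m) ≫
        (act.obj X').map ((act.map g).app m)
  pentagon : ∀ (X Y Z : C) (m : M),
    (act.map (α_ X Y Z).hom).app m ≫ (assocIso X (Y ⊗ Z)).hom.app m ≫
        (act.obj X).map ((assocIso Y Z).hom.app m) =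
      (assocIso (X ⊗ Y) Z).hom.app m ≫ (assocIso X Y).hom.app ((act.obj Z).obj m)
  triangle : ∀ (X : C) (m : M),
    (act.map (ρ_ X).hom).app m =
      (assocIso X (𝟙_ C)).hom.app m ≫ (act.obj X).map (unitIso.hom.app m)

section Triangulated

variable (T : Type*) [Category T] [HasZeroObject T] [Preadditive T] [HasShift T ℤ]
  [∀ n : ℤ, (shiftFunctor T n).Additive] [Pretriangulated T]

/-- A monoidal triangulated category: a pretriangulated category with a monoidal
structure whose tensor product is a triangulated functor in each variable. -/
class MonoidalTriangulated [MonoidalCategory T] where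
  additiveLeft (X : T) : (tensorLeft X).Additive
  additiveRight (X : T) : (tensorRight X).Additive
  commShiftLeft (X : T) : (tensorLeft X).CommShift ℤ
  commShiftRight (X : T) : (tensorRight X).CommShift ℤ
  triangulatedLeft (X : T) : letI := commShiftLeft X; (tensorLeft X).IsTriangulated
  triangulatedRight (X : T) : letI := commShiftRight X; (tensorRight X).IsTriangulated

variable (K : Type*) [Category K] [HasZeroObject K] [Preadditive K] [HasShift K ℤ]
  [∀ n : ℤ, (shiftFunctor K n).Additive] [Pretriangulated K]

/-- A left triangulated module category structure on a pretriangulated category `K`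
over a monoidal triangulated category `T`: a `T`-module structure whose module
product bifunctor is a triangulated functor in each variable. -/
structure TriangulatedModuleStruct [MonoidalCategory T] extends ModuleStruct T K where
  additive_obj (X : T) : (act.obj X).Additive
  commShift_obj (X : T) : (act.obj X).CommShift ℤ
  triangulated_obj (X : T) : letI := commShift_obj X; (act.obj X).IsTriangulated
  additive_flip (m : K) : (act.flip.obj m).Additive
  commShift_flip (m : K) : (act.flip.obj m).CommShift ℤ
  triangulated_flip (m : K) : letI := commShift_flip m; (act.flip.obj m).IsTriangulated

variable {K}

/-- A thick subcategory of a pretriangulated category, as a predicate on objects: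
a triangulated subcategory closed under direct summands. -/
structure IsThickSubcategory [HasBinaryBiproducts K] (P : K → Prop) : Prop where
  zero : P 0
  of_iso : ∀ {X Y : K}, (X ≅ Y) → P X → P Y
  shift : ∀ (X : K) (n : ℤ), P X → P (X⟦n⟧)
  ext₂ : ∀ (Tr : Triangle K), (Tr ∈ distTriang K) → P Tr.obj₁ → P Tr.obj₃ → P Tr.obj₂
  of_summand : ∀ (X Y : K), P (X ⊞ Y) → P X

/-- The class of morphisms whose cone lies in the given subcategory; inverting them
yields the Verdier quotient. -/
def thickW (P : K → Prop) : MorphismProperty K :=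
  fun X Y f => ∃ (Z : K) (g : Y ⟶ Z) (h : Z ⟶ X⟦(1 : ℤ)⟧),
    (Triangle.mk f g h ∈ distTriang K) ∧ P Z

end Triangulated

section TStructureExtras

variable {K : Type*} [Category K] [HasZeroObject K] [Preadditive K] [HasShift K ℤ]
  [∀ n : ℤ, (shiftFunctor K n).Additive] [Pretriangulated K]

/-- A t-structure is bounded if every object is bounded above and below. -/
def tBounded (t : TStructure K) : Prop :=
  (∀ X : K, ∃ n : ℤ, t.le n X) ∧ (∀ X : K, ∃ n : ℤ, t.ge n X)

/-- The heart of a t-structure, as a predicate on objects. -/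
def heartP (t : TStructure K) (X : K) : Prop := t.le 0 X ∧ t.ge 0 X

/-- A choice of truncation `τ_{≤ n} A` for a t-structure. -/
noncomputable def truncLEObj (t : TStructure K) (n : ℤ) (A : K) : K :=
  (t.exists_triangle A n (n + 1) rfl).choose

/-- A choice of truncation `τ_{≥ n} A` for a t-structure. -/
noncomputable def truncGEObj (t : TStructure K) (n : ℤ) (A : K) : K :=
  (t.exists_triangle A (n - 1) n (by omega)).choose_spec.choose

/-- The cohomology object `H^n_t(A) = (τ_{≤ n} τ_{≥ n} A)⟦n⟧` of a t-structure. -/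
noncomputable def homologyObj (t : TStructure K) (n : ℤ) (A : K) : K :=
  (truncLEObj t n (truncGEObj t n A))⟦n⟧

end TStructureExtras

section Dev

variable {T : Type*} [Category T] [HasZeroObject T] [Preadditive T] [HasShift T ℤ]
  [∀ n : ℤ, (shiftFunctor T n).Additive] [Pretriangulated T] [MonoidalCategory T]

/-- The deviation of a t-structure on a monoidal triangulated category: the set of
integers `n` such that `T^{≤0} ⊗ T^{≤n} ⊆ T^{≤0}` and `T^{≥0} ⊗ T^{≥n} ⊆ T^{≥0}`. -/
def monDev (t : TStructure T) : Set ℤ :=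
  {n | (∀ X Y : T, t.le 0 X → t.le n Y → t.le 0 (X ⊗ Y)) ∧
       (∀ X Y : T, t.ge 0 X → t.ge n Y → t.ge 0 (X ⊗ Y))}

/-- A monoidal t-structure: a bounded t-structure with nonempty deviation. -/
def IsMonoidalTStructure (t : TStructure T) : Prop :=
  tBounded t ∧ (monDev t).Nonempty

variable {K : Type*} [Category K] [HasZeroObject K] [Preadditive K] [HasShift K ℤ]
  [∀ n : ℤ, (shiftFunctor K n).Additive] [Pretriangulated K]

/-- The deviation `dev_t(t')` of a t-structure `t'` on a triangulated module category
(with module product bifunctor `act`) with respect to a t-structure `t` on the acting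
monoidal triangulated category: the set of integers `m` with
`T^{≤0} ⊗ K^{≤m} ⊆ K^{≤0}` and `T^{≥0} ⊗ K^{≥m} ⊆ K^{≥0}`. -/
def modDev (act : T ⥤ K ⥤ K) (t : TStructure T) (t' : TStructure K) : Set ℤ :=
  {m | (∀ (X : T) (M : K), t.le 0 X → t'.le m M → t'.le 0 ((act.obj X).obj M)) ∧
       (∀ (X : T) (M : K), t.ge 0 X → t'.ge m M → t'.ge 0 ((act.obj X).obj M))}

/-- A triangulated module t-structure with respect to `t`: a bounded t-structure
with nonempty deviation with respect to `t`. -/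
def IsModuleTStructure (act : T ⥤ K ⥤ K) (t : TStructure T) (t' : TStructure K) : Prop :=
  tBounded t' ∧ (modDev act t t').Nonempty

end Dev

end DerivedModule

open DerivedModule

/-!
The product `(X, M) ↦ X ⊗ M` is triangulated in each variable, so compatibility with the hearts
propagates by dévissage: amplitudes add up, for upper and for lower bounds. Hence, if `A` is
concentrated in degree `a`, then `H^n (A ⊗ M) ≅ A ⊗ H^{n-a} M` up to shifts, because neither
`τ_{<n-a} M` nor `τ_{>n-a} M` contributes. For general `X` in degrees `≥ a`, put `A = τ_{≤a} X` and
consider the triangle `X ⊗ τ_{<n-a} M ⟶ X ⊗ M ⟶ X ⊗ τ_{≥n-a} M`. On `H^n` its second map is split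
epi, a section being induced by `A ⊗ M ⟶ X ⊗ M`, and its first map is mono since
`X ⊗ τ_{≥n-a} M` lies in degrees `≥ n`. As `X ⊗ τ_{<n-a} M ⟶ τ_{>a} X ⊗ τ_{<n-a} M ⟶ τ_{>a} X ⊗ M`
induces isomorphisms on `H^n`, this gives `H^n (X ⊗ M) ≅ H^n (τ_{>a} X ⊗ M) ⊕ H^n (A ⊗ M)`, and
the formula follows by induction on the amplitude of `X`.
-/

namespace DerivedModule

section Biproduct

variable {E : Type*} [Category E] [HasZeroMorphisms E] [HasFiniteBiproducts E]

lemma isZero_biproduct {J : Type*} [Finite J] {f : J → E} (hf : ∀ j, IsZero (f j)) :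
    IsZero (⨁ f) := by
  rw [IsZero.iff_id_eq_zero]
  exact biproduct.hom_ext' _ _ fun j => (hf j).eq_of_src _ _

lemma nonempty_biproduct_map_iso {ι κ : Type*} (i : ι ↪ κ) (S : Finset ι) (f : κ → E) :
    Nonempty ((⨁ fun p : S => f (i p)) ≅ ⨁ fun s : S.map i => f s) := by
  let g : S → S.map i := fun p => ⟨i p, Finset.mem_map_of_mem i p.2⟩
  have hg : Function.Bijective g := by
    refine ⟨fun p p' h => Subtype.ext (i.injective (congrArg Subtype.val h)), fun ⟨s, hs⟩ => ?_⟩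
    obtain ⟨p, hp, rfl⟩ := Finset.mem_map.1 hs
    exact ⟨⟨p, hp⟩, rfl⟩
  exact ⟨biproduct.whiskerEquiv (g := fun s : S.map i => f s) (Equiv.ofBijective g hg)
    fun p => Iso.refl (f (i p))⟩

attribute [local instance] hasBinaryBiproducts_of_finite_biproducts

lemma nonempty_biproduct_option_iso {J : Type*} [Finite J] (f : Option J → E) :
    Nonempty ((⨁ f) ≅ f none ⊞ ⨁ fun j => f (some j)) := by
  let hom : (j : Option J) → (f j ⟶ f none ⊞ ⨁ fun j => f (some j))
    | none => biprod.inl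
    | some j => biproduct.ι (fun j => f (some j)) j ≫ biprod.inr
  let inv : (f none ⊞ ⨁ fun j => f (some j)) ⟶ ⨁ f :=
    biprod.desc (biproduct.ι f none) (biproduct.desc fun j => biproduct.ι f (some j))
  refine ⟨⟨biproduct.desc hom, inv, biproduct.hom_ext' _ _ ?_, biprod.hom_ext' _ _ ?_
    (biproduct.hom_ext' _ _ fun j => ?_)⟩⟩
  · rintro (_ | j) <;> simp [hom, inv]
  all_goals simp [hom, inv]

lemma nonempty_biproduct_insert_iso {ι : Type*} [DecidableEq ι] {S : Finset ι} {s : ι}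
    (hs : s ∉ S) (f : ι → E) :
    Nonempty ((⨁ fun x : (insert s S : Finset ι) => f x) ≅ f s ⊞ ⨁ fun x : S => f x) := by
  let e := (Finset.subtypeInsertEquivOption hs).symm
  obtain ⟨i⟩ := nonempty_biproduct_option_iso (fun x => f (e x))
  exact ⟨(biproduct.whiskerEquiv e fun _ => Iso.refl _).symm ≪≫ i⟩

lemma nonempty_biproduct_Icc_iso {a b : ℤ} (hab : a ≤ b) (f : ℤ → E) :
    Nonempty ((⨁ fun p : Finset.Icc a b => f p) ≅
      f a ⊞ ⨁ fun p : Finset.Icc (a + 1) b => f p) := by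
  have hs : a ∉ Finset.Icc (a + 1) b := by simp
  rw [← Finset.insert_Icc_succ_left_eq_Icc hab]
  exact nonempty_biproduct_insert_iso hs f

end Biproduct

section Truncation

variable {C : Type*} [Category C] [HasZeroObject C] [Preadditive C] [HasShift C ℤ]
  [∀ n : ℤ, (shiftFunctor C n).Additive] [Pretriangulated C]

lemma exists_mor₁_comp_eq {A : Triangle C} (hA : A ∈ distTriang C) {Y : C} (f : A.obj₁ ⟶ Y)
    (hf : A.mor₃ ≫ f⟦(1 : ℤ)⟧' = 0) : ∃ g : A.obj₂ ⟶ Y, A.mor₁ ≫ g = f := by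
  obtain ⟨g, hg, -⟩ := complete_distinguished_triangle_morphism₂ A _ hA
    (contractible_distinguished Y) f 0 (hf.trans comp_zero.symm)
  exact ⟨g, hg.trans (comp_id f)⟩

variable (t : TStructure C)

lemma isLocal_mor₂_of_isLE {A : Triangle C} (hA : A ∈ distTriang C) {n₀ n₁ : ℤ}
    (h : n₀ + 1 = n₁) (hA₁ : t.IsLE A.obj₁ n₀) : (t.ge n₁).isLocal A.mor₂ := by
  intro Y hY
  have : t.IsGE Y n₁ := ⟨hY⟩
  have : t.IsLE (A.obj₁⟦(1 : ℤ)⟧) (n₀ - 1) := t.isLE_shift A.obj₁ n₀ 1 (n₀ - 1)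
  refine ⟨fun g₁ g₂ hg => sub_eq_zero.1 ?_, fun f => ?_⟩
  · obtain ⟨k, hk⟩ := Triangle.yoneda_exact₃ A hA (g₁ - g₂)
      ((Preadditive.comp_sub A.mor₂ g₁ g₂).trans (sub_eq_zero.2 hg))
    rw [hk, t.zero k (n₀ - 1) n₁, comp_zero]
  · obtain ⟨g, hg⟩ := Triangle.yoneda_exact₂ A hA f (t.zero _ n₀ n₁)
    exact ⟨g, hg.symm⟩

lemma isColocal_mor₁_of_isGE {A : Triangle C} (hA : A ∈ distTriang C) {n₀ n₁ : ℤ}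
    (h : n₀ + 1 = n₁) (hA₃ : t.IsGE A.obj₃ n₁) : (t.le n₀).isColocal A.mor₁ := by
  intro Y hY
  have : t.IsLE Y n₀ := ⟨hY⟩
  have : t.IsGE (A.invRotate.obj₁) (n₁ + 1) := t.isGE_shift A.obj₃ n₁ (-1) (n₁ + 1)
  refine ⟨fun g₁ g₂ hg => sub_eq_zero.1 ?_, fun f => ?_⟩
  · obtain ⟨k, hk⟩ := Triangle.coyoneda_exact₂ _ (inv_rot_of_distTriang _ hA) (g₁ - g₂)
      ((Preadditive.sub_comp g₁ g₂ A.mor₁).trans (sub_eq_zero.2 hg))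
    rw [hk, t.zero k n₀ (n₁ + 1)]
    exact zero_comp
  · obtain ⟨g, hg⟩ := Triangle.coyoneda_exact₂ A hA f (t.zero _ n₀ n₁)
    exact ⟨g, hg.symm⟩

lemma isLocal_truncGEπ_app (n : ℤ) (X : C) : (t.ge n).isLocal ((t.truncGEπ n).app X) :=
  isLocal_mor₂_of_isLE t (t.triangleLTGE_distinguished n X) (sub_add_cancel n 1) inferInstance

lemma isColocal_truncLEι_app (n : ℤ) (X : C) : (t.le n).isColocal ((t.truncLEι n).app X) :=
  isColocal_mor₁_of_isGE t (t.triangleLEGE_distinguished n (n + 1) rfl X) rfl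
    (inferInstanceAs (t.IsGE ((t.truncGE (n + 1)).obj X) (n + 1)))

lemma isIso_truncGE_map_of_isLocal {X Y : C} {n : ℤ} {f : X ⟶ Y} (hf : (t.ge n).isLocal f) :
    IsIso ((t.truncGE n).map f) := by
  rw [← (t.ge n).isLocal_iff_isIso _ (t.ge_of_isGE _ n) (t.ge_of_isGE _ n)]
  refine (t.ge n).isLocal.of_precomp _ _ (isLocal_truncGEπ_app t n X) ?_
  have hπ := t.truncGEπ_naturality n f
  rw [hπ]
  exact (t.ge n).isLocal.comp_mem _ _ hf (isLocal_truncGEπ_app t n Y)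

lemma isIso_truncLE_map_of_isColocal {X Y : C} {n : ℤ} {f : X ⟶ Y}
    (hf : (t.le n).isColocal f) : IsIso ((t.truncLE n).map f) := by
  rw [← (t.le n).isColocal_iff_isIso _ (t.le_of_isLE _ n) (t.le_of_isLE _ n)]
  refine (t.le n).isColocal.of_postcomp _ _ (isColocal_truncLEι_app t n Y) ?_
  rw [(t.truncLEι n).naturality]
  exact (t.le n).isColocal.comp_mem _ _ (isColocal_truncLEι_app t n X) hf

lemma isLocal_shift {X Y : C} {n : ℤ} {f : X ⟶ Y} (hf : (t.ge n).isLocal f) :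
    (t.ge n).isLocal (f⟦(1 : ℤ)⟧') := by
  intro Z hZ
  have : t.IsGE Z n := ⟨hZ⟩
  have : t.IsGE (Z⟦(-1 : ℤ)⟧) (n + 1) := t.isGE_shift Z n (-1) (n + 1)
  have hZ' : t.ge n (Z⟦(-1 : ℤ)⟧) := t.isGE_of_ge _ n (n + 1) |>.ge
  let adj : shiftFunctor C (1 : ℤ) ⊣ shiftFunctor C (-1 : ℤ) := (shiftEquiv C (1 : ℤ)).toAdjunction
  have : (fun g => f⟦(1 : ℤ)⟧' ≫ g) =
      (adj.homEquiv X Z).symm ∘ (fun g => f ≫ g) ∘ adj.homEquiv Y Z := by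
    ext g
    exact (Equiv.eq_symm_apply _).2 (adj.homEquiv_naturality_left f g)
  rw [this]
  exact (Equiv.bijective _).comp ((hf _ hZ').comp (Equiv.bijective _))

lemma isLocal_hom₂ {A B : Triangle C} (hA : A ∈ distTriang C) (hB : B ∈ distTriang C)
    (φ : A ⟶ B) {n : ℤ} (h₁ : (t.ge n).isLocal φ.hom₁) (h₃ : IsIso φ.hom₃) :
    (t.ge n).isLocal φ.hom₂ := by
  intro Y hY
  refine ⟨fun g₁ g₂ hg => sub_eq_zero.1 ?_, fun f => ?_⟩
  · set g := g₁ - g₂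
    have hg : φ.hom₂ ≫ g = 0 := by simpa [g, sub_eq_zero] using hg
    obtain ⟨h, hh⟩ := Triangle.yoneda_exact₂ B hB g ((h₁ Y hY).1 <| by
      simp [← φ.comm₁_assoc, hg])
    obtain ⟨k, hk⟩ := Triangle.yoneda_exact₃ A hA (φ.hom₃ ≫ h) (by
      rw [φ.comm₂_assoc, ← hh, hg])
    obtain ⟨k, rfl⟩ := (isLocal_shift t h₁ Y hY).2 k
    have : h = B.mor₃ ≫ k := by
      rw [← cancel_epi φ.hom₃, hk, ← φ.comm₃_assoc]
    rw [hh, this, comp_distTriang_mor_zero₂₃_assoc _ hB, zero_comp]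
  · obtain ⟨f₁, hf₁ : φ.hom₁ ≫ f₁ = A.mor₁ ≫ f⟩ := (h₁ Y hY).2 (A.mor₁ ≫ f)
    obtain ⟨g, hg⟩ := exists_mor₁_comp_eq hB f₁ (by
      rw [← cancel_epi φ.hom₃, ← φ.comm₃_assoc, ← Functor.map_comp, hf₁, Functor.map_comp,
        comp_distTriang_mor_zero₃₁_assoc _ hA, zero_comp, comp_zero])
    obtain ⟨h, hh⟩ := Triangle.yoneda_exact₂ A hA (f - φ.hom₂ ≫ g) (by
      simp [φ.comm₁_assoc, hg, hf₁])
    refine ⟨g + B.mor₂ ≫ inv φ.hom₃ ≫ h, ?_⟩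
    simp [← φ.comm₂_assoc, ← hh]

lemma exists_triangle_isLocal {A : Triangle C} (hA : A ∈ distTriang C) {n : ℤ} {U : C}
    {π : A.obj₁ ⟶ U} (hπ : (t.ge n).isLocal π) :
    ∃ (E : C) (i : U ⟶ E) (p : E ⟶ A.obj₃) (e : A.obj₂ ⟶ E),
      Triangle.mk i p (A.mor₃ ≫ π⟦1⟧') ∈ distTriang C ∧ (t.ge n).isLocal e ∧
        A.mor₁ ≫ e = π ≫ i ∧ e ≫ p = A.mor₂ := by
  obtain ⟨E, i, p, hE⟩ := distinguished_cocone_triangle₂ (A.mor₃ ≫ π⟦(1 : ℤ)⟧')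
  obtain ⟨e, he₁, he₂⟩ := complete_distinguished_triangle_morphism₂ A _ hA hE π (𝟙 _)
    (id_comp _).symm
  let φ : A ⟶ Triangle.mk i p (A.mor₃ ≫ π⟦1⟧') :=
    { hom₁ := π, hom₂ := e, hom₃ := 𝟙 _, comm₁ := he₁, comm₂ := he₂,
      comm₃ := (id_comp _).symm }
  exact ⟨E, i, p, e, hE, isLocal_hom₂ t hA hE φ hπ (inferInstanceAs (IsIso (𝟙 A.obj₃))), he₁,
    he₂.symm.trans (comp_id _)⟩

lemma exists_distinguished_truncGE_map {A : Triangle C} (hA : A ∈ distTriang C) (n : ℤ)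
    (hA₃ : t.IsGE A.obj₃ n) :
    ∃ δ, Triangle.mk ((t.truncGE n).map A.mor₁) ((t.truncGE n).map A.mor₂) δ ∈ distTriang C := by
  obtain ⟨E, i, p, e, hE, he, hi, hp⟩ :=
    exists_triangle_isLocal t hA (isLocal_truncGEπ_app t n A.obj₁)
  have : t.IsGE E n := t.isGE₂ _ hE n
    (inferInstanceAs (t.IsGE ((t.truncGE n).obj A.obj₁) n)) hA₃
  let π (X : C) : X ⟶ (t.truncGE n).obj X := (t.truncGEπ n).app X
  let ψ : (t.truncGE n).obj A.obj₂ ⟶ E := t.descTruncGE e n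
  have hψ : π A.obj₂ ≫ ψ = e := t.π_descTruncGE e n
  have hψ' : IsIso ψ := by
    rw [← (t.ge n).isLocal_iff_isIso ψ (t.ge_of_isGE _ n) (t.ge_of_isGE _ n)]
    exact (t.ge n).isLocal.of_precomp _ _ (isLocal_truncGEπ_app t n A.obj₂) (hψ ▸ he)
  have : IsIso (π A.obj₃) := inferInstanceAs (IsIso ((t.truncGEπ n).app A.obj₃))
  have hnat {X Y : C} (f : X ⟶ Y) : π X ≫ (t.truncGE n).map f = f ≫ π Y :=
    ((t.truncGEπ n).naturality f).symm
  have h₁ : (t.truncGE n).map A.mor₁ ≫ ψ = i := t.from_truncGE_obj_ext (by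
    change π A.obj₁ ≫ _ ≫ _ = π A.obj₁ ≫ _
    rw [reassoc_of% hnat A.mor₁, hψ, hi])
  have h₂ : (t.truncGE n).map A.mor₂ ≫ inv (π A.obj₃) = ψ ≫ p := t.from_truncGE_obj_ext (by
    change π A.obj₂ ≫ _ ≫ _ = π A.obj₂ ≫ _ ≫ _
    rw [reassoc_of% hnat A.mor₂, reassoc_of% hψ, hp, IsIso.hom_inv_id, comp_id])
  let δ := inv (π A.obj₃) ≫ A.mor₃ ≫ (π A.obj₁)⟦(1 : ℤ)⟧'
  have h₃ : δ ≫ (𝟙 ((t.truncGE n).obj A.obj₁))⟦(1 : ℤ)⟧' = δ := by simp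
  let eψ : (t.truncGE n).obj A.obj₂ ≅ E := asIso ψ
  exact ⟨δ, isomorphic_distinguished _ hE _ (Triangle.isoMk _ _ (Iso.refl _) eψ
    (asIso (π A.obj₃)).symm (h₁.trans (id_comp i).symm) h₂ h₃)⟩

/-- The cohomology functor of a t-structure without its final shift: `H^n(X)⟦-n⟧`. -/
noncomputable def unshiftedHomology (n : ℤ) : C ⥤ C := t.truncLEGE n n

instance (n : ℤ) : (unshiftedHomology t n).Additive :=
  inferInstanceAs (t.truncLEGE n n).Additive

/-- The inclusion `τ_{≤n} τ_{≥n} X ⟶ τ_{≥n} X`. -/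
noncomputable def unshiftedHomologyι (n : ℤ) : unshiftedHomology t n ⟶ t.truncGE n :=
  Functor.whiskerLeft (t.truncGE n) (t.truncLEι n)

lemma isColocal_unshiftedHomologyι_app (n : ℤ) (X : C) :
    (t.le n).isColocal ((unshiftedHomologyι t n).app X) :=
  isColocal_truncLEι_app t n ((t.truncGE n).obj X)

lemma isIso_unshiftedHomology_map_of_isLE {A : Triangle C} (hA : A ∈ distTriang C) {n₀ n : ℤ}
    (h : n₀ + 1 = n) (hA₁ : t.IsLE A.obj₁ n₀) : IsIso ((unshiftedHomology t n).map A.mor₂) := by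
  have := isIso_truncGE_map_of_isLocal t (isLocal_mor₂_of_isLE t hA h hA₁)
  exact Functor.map_isIso (t.truncLE n) ((t.truncGE n).map A.mor₂)

lemma isIso_unshiftedHomology_map_of_isGE {A : Triangle C} (hA : A ∈ distTriang C) {n n₁ : ℤ}
    (h : n + 1 = n₁) (hA₃ : t.IsGE A.obj₃ n₁) :
    IsIso ((unshiftedHomology t n).map A.mor₁) := by
  have : t.IsGE A.obj₃ n := t.isGE_of_ge _ n n₁
  obtain ⟨δ, hδ⟩ := exists_distinguished_truncGE_map t hA n this
  have e : A.obj₃ ≅ (t.truncGE n).obj A.obj₃ := asIso ((t.truncGEπ n).app A.obj₃)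
  exact isIso_truncLE_map_of_isColocal t (isColocal_mor₁_of_isGE t hδ h (t.isGE_of_iso e n₁))

lemma existsUnique_comp_mor₁_eq {A : Triangle C} (hA : A ∈ distTriang C) {n : ℤ}
    (hA₃ : t.IsGE A.obj₃ n) {Z : C} [t.IsLE Z n] (f : Z ⟶ A.obj₂) (hf : f ≫ A.mor₂ = 0) :
    ∃! g : Z ⟶ A.obj₁, g ≫ A.mor₁ = f := by
  obtain ⟨g, hg⟩ := Triangle.coyoneda_exact₂ A hA f hf
  refine ⟨g, hg.symm, fun g' hg' => sub_eq_zero.1 ?_⟩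
  have : t.IsGE A.invRotate.obj₁ (n + 1) := t.isGE_shift A.obj₃ n (-1) (n + 1)
  obtain ⟨k, hk⟩ := Triangle.coyoneda_exact₂ _ (inv_rot_of_distTriang _ hA) (g' - g)
    ((Preadditive.sub_comp g' g A.mor₁).trans (sub_eq_zero.2 (hg'.trans hg)))
  rw [hk, t.zero k n (n + 1)]
  exact zero_comp

lemma existsUnique_comp_unshiftedHomology_map_mor₁_eq {A : Triangle C} (hA : A ∈ distTriang C)
    {n : ℤ} (hA₃ : t.IsGE A.obj₃ n) {Z : C} [t.IsLE Z n]
    (f : Z ⟶ (unshiftedHomology t n).obj A.obj₂)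
    (hf : f ≫ (unshiftedHomology t n).map A.mor₂ = 0) :
    ∃! g : Z ⟶ (unshiftedHomology t n).obj A.obj₁,
      g ≫ (unshiftedHomology t n).map A.mor₁ = f := by
  let ι := unshiftedHomologyι t n
  have hι (X : C) := isColocal_unshiftedHomologyι_app t n X Z (t.le_of_isLE Z n)
  obtain ⟨δ, hδ⟩ := exists_distinguished_truncGE_map t hA n hA₃
  have hfι : (f ≫ ι.app A.obj₂) ≫ (t.truncGE n).map A.mor₂ = 0 := by
    rw [assoc, ← ι.naturality, reassoc_of% hf, zero_comp]
  obtain ⟨g, hg : g ≫ (t.truncGE n).map A.mor₁ = f ≫ ι.app A.obj₂, hg'⟩ :=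
    existsUnique_comp_mor₁_eq t (n := n) hδ (inferInstanceAs (t.IsGE ((t.truncGE n).obj A.obj₃) n))
      (f ≫ ι.app A.obj₂) hfι
  obtain ⟨g, rfl⟩ := (hι A.obj₁).2 g
  have hmap (k : Z ⟶ (unshiftedHomology t n).obj A.obj₁) :
      (k ≫ (unshiftedHomology t n).map A.mor₁) ≫ ι.app A.obj₂ =
        (k ≫ ι.app A.obj₁) ≫ (t.truncGE n).map A.mor₁ := by
    rw [assoc, assoc, ι.naturality]
  exact ⟨g, (hι A.obj₂).1 ((hmap g).trans hg), fun k hk => (hι A.obj₁).1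
    (hg' _ ((hmap k).symm.trans (congrArg (· ≫ ι.app A.obj₂) hk)))⟩

instance (n : ℤ) (X : C) : t.IsLE ((unshiftedHomology t n).obj X) n :=
  inferInstanceAs (t.IsLE ((t.truncLE n).obj ((t.truncGE n).obj X)) n)

lemma nonempty_unshiftedHomology_obj₂_iso_biprod {A : Triangle C} (hA : A ∈ distTriang C)
    {n : ℤ} (hA₃ : t.IsGE A.obj₃ n) {B : C} (s : B ⟶ A.obj₂)
    (hs : IsIso ((unshiftedHomology t n).map (s ≫ A.mor₂))) :
    Nonempty ((unshiftedHomology t n).obj A.obj₂ ≅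
      (unshiftedHomology t n).obj A.obj₁ ⊞ (unshiftedHomology t n).obj B) := by
  let H := unshiftedHomology t n
  let σ : H.obj A.obj₃ ⟶ H.obj A.obj₂ := inv (H.map (s ≫ A.mor₂)) ≫ H.map s
  have hσ : σ ≫ H.map A.mor₂ = 𝟙 _ := by simp [σ, ← Functor.map_comp]
  have hzero : H.map A.mor₁ ≫ H.map A.mor₂ = 0 := by
    rw [← H.map_comp, comp_distTriang_mor_zero₁₂ A hA, H.map_zero]
  obtain ⟨r, hr, -⟩ := existsUnique_comp_unshiftedHomology_map_mor₁_eq t hA hA₃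
    (𝟙 (H.obj A.obj₂) - H.map A.mor₂ ≫ σ) (by simp [hσ, H])
  have hr' : H.map A.mor₁ ≫ r = 𝟙 _ :=
    (existsUnique_comp_unshiftedHomology_map_mor₁_eq t hA hA₃ (H.map A.mor₁) hzero).unique
      (by simp [H, hr, reassoc_of% hzero]) (id_comp _)
  let S : (ShortComplex.mk _ _ hzero).Splitting :=
    { r := r
      s := σ
      f_r := hr'
      s_g := hσ
      id := by rw [hr]; exact sub_add_cancel _ _ }
  exact ⟨S.isoBinaryBiproduct ≪≫ biprod.mapIso (Iso.refl _) (asIso (H.map (s ≫ A.mor₂))).symm⟩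

lemma isGE_truncLE_obj (X : C) {a b : ℤ} (h : a ≤ b + 2) [t.IsGE X a] :
    t.IsGE ((t.truncLE b).obj X) a := by
  have hX := t.triangleLEGE_distinguished b (b + 1) rfl X
  have : t.IsGE ((t.truncGE (b + 1)).obj X) (b + 1) := inferInstance
  refine t.isGE₂ _ (inv_rot_of_distTriang _ hX) a ?_ ‹_›
  have := t.isGE_shift ((t.truncGE (b + 1)).obj X) (b + 1) (-1) (b + 2)
  exact t.isGE_of_ge (((t.truncGE (b + 1)).obj X)⟦(-1 : ℤ)⟧) a (b + 2)

lemma isLE_truncGE_obj (X : C) {a b : ℤ} (h : a ≤ b + 2) [t.IsLE X b] :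
    t.IsLE ((t.truncGE a).obj X) b := by
  have hX := t.triangleLTGE_distinguished a X
  refine t.isLE₂ _ (rot_of_distTriang _ hX) b ‹_› ?_
  have := t.isLE_shift ((t.truncLT a).obj X) (a - 1) 1 (a - 2)
  exact t.isLE_of_le (((t.truncLT a).obj X)⟦(1 : ℤ)⟧) (a - 2) b

instance (n : ℤ) (X : C) : t.IsGE ((unshiftedHomology t n).obj X) n :=
  isGE_truncLE_obj t ((t.truncGE n).obj X) (by lia)

lemma nonempty_truncLEObj_iso (n : ℤ) (X : C) :
    Nonempty (truncLEObj t n X ≅ (t.truncLE n).obj X) := by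
  obtain ⟨Y, hL, hY, f, g, δ, hT⟩ := (t.exists_triangle X n (n + 1) rfl).choose_spec
  change truncLEObj t n X ⟶ X at f
  have : t.IsLE (truncLEObj t n X) n := ⟨hL⟩
  have : IsIso ((t.truncLE n).map f) :=
    isIso_truncLE_map_of_isColocal t (isColocal_mor₁_of_isGE t hT rfl ⟨hY⟩)
  exact ⟨(asIso ((t.truncLEι n).app (truncLEObj t n X))).symm ≪≫ asIso ((t.truncLE n).map f)⟩

lemma nonempty_truncGEObj_iso (n : ℤ) (X : C) :
    Nonempty (truncGEObj t n X ≅ (t.truncGE n).obj X) := by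
  obtain ⟨hL, hY, f, g, δ, hT⟩ :=
    (t.exists_triangle X (n - 1) n (sub_add_cancel n 1)).choose_spec.choose_spec
  change X ⟶ truncGEObj t n X at g
  have : t.IsGE (truncGEObj t n X) n := ⟨hY⟩
  have : IsIso ((t.truncGE n).map g) :=
    isIso_truncGE_map_of_isLocal t (isLocal_mor₂_of_isLE t hT (sub_add_cancel n 1) ⟨hL⟩)
  exact ⟨asIso ((t.truncGEπ n).app (truncGEObj t n X)) ≪≫ (asIso ((t.truncGE n).map g)).symm⟩

lemma nonempty_homologyObj_iso (n : ℤ) (X : C) :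
    Nonempty (homologyObj t n X ≅ ((unshiftedHomology t n).obj X)⟦n⟧) := by
  obtain ⟨e₁⟩ := nonempty_truncLEObj_iso t n (truncGEObj t n X)
  obtain ⟨e₂⟩ := nonempty_truncGEObj_iso t n X
  exact ⟨(shiftFunctor C n).mapIso (e₁ ≪≫ (t.truncLE n).mapIso e₂)⟩

lemma isZero_unshiftedHomology_obj_of_isLE (X : C) {b n : ℤ} (h : b < n) [t.IsLE X b] :
    IsZero ((unshiftedHomology t n).obj X) := by
  have : t.IsLE X (n - 1) := t.isLE_of_le X b (n - 1)
  exact (t.truncLE n).map_isZero (t.isZero_truncGE_obj_of_isLE (n - 1) n (sub_add_cancel n 1) X)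

lemma isZero_unshiftedHomology_obj_of_isGE (X : C) {a n : ℤ} (h : n < a) [t.IsGE X a] :
    IsZero ((unshiftedHomology t n).obj X) := by
  have : t.IsGE X (n + 1) := t.isGE_of_ge X (n + 1) a
  exact t.isZero_truncLE_obj_of_isGE n (n + 1) rfl ((t.truncGE n).obj X)

lemma isZero_homologyObj (X : C) {a b n : ℤ} [t.IsGE X a] [t.IsLE X b]
    (hn : n ∉ Finset.Icc a b) : IsZero (homologyObj t n X) := by
  obtain ⟨e⟩ := nonempty_homologyObj_iso t n X
  refine ((shiftFunctor C n).map_isZero ?_).of_iso e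
  rcases lt_or_ge n a with h | h
  · exact isZero_unshiftedHomology_obj_of_isGE t X h
  · exact isZero_unshiftedHomology_obj_of_isLE t X
      (lt_of_not_ge fun h' => hn (Finset.mem_Icc.2 ⟨h, h'⟩))

lemma amplitude_induction {b : ℤ} {P : ℤ → C → Prop} (zero : ∀ a X, IsZero X → P a X)
    (step : ∀ a X, a ≤ b → t.IsGE X a → t.IsLE X b → P (a + 1) ((t.truncGE (a + 1)).obj X) → P a X)
    (a : ℤ) (X : C) (hX : t.IsGE X a) (hX' : t.IsLE X b) : P a X := by
  obtain ⟨N, hN⟩ : ∃ N : ℕ, b < a + N := ⟨(b + 1 - a).toNat, by lia⟩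
  induction N generalizing a X with
  | zero => exact zero a X (t.isZero X b a (by simpa using hN))
  | succ N ih =>
    rcases lt_or_ge b a with hab | hab
    · exact zero a X (t.isZero X b a hab)
    · exact step a X hab hX hX' (ih (a + 1) _ inferInstance
        (isLE_truncGE_obj t X (by lia)) (by push_cast at hN; lia))

lemma devissage {P : C → Prop} (zero : ∀ X, IsZero X → P X)
    (ext : ∀ A ∈ distTriang C, P A.obj₁ → P A.obj₃ → P A.obj₂) {a b : ℤ}
    (pure : ∀ X n, a ≤ n → n ≤ b → t.IsGE X n → t.IsLE X n → P X)
    (X : C) (hX : t.IsGE X a) (hX' : t.IsLE X b) : P X :=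
  amplitude_induction t (b := b) (P := fun c Y => a ≤ c → P Y) (fun _ Y hY _ => zero Y hY)
    (fun c Y hcb hY _ ih hac => ext _
      (t.triangleLEGE_distinguished c (c + 1) rfl Y)
      (pure ((t.truncLE c).obj Y) c hac hcb (isGE_truncLE_obj t Y (by lia)) inferInstance)
      (ih (by lia)))
    a X hX hX' le_rfl

lemma nonempty_unshiftedHomology_obj_iso (n : ℤ) (X : C) [t.IsGE X n] [t.IsLE X n] :
    Nonempty ((unshiftedHomology t n).obj X ≅ X) := by
  have : t.IsLE ((t.truncGE n).obj X) n := isLE_truncGE_obj t X (by lia)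
  let e : (t.truncLE n).obj ((t.truncGE n).obj X) ≅ (t.truncGE n).obj X :=
    asIso ((t.truncLEι n).app _)
  exact ⟨e ≪≫ (asIso ((t.truncGEπ n).app X)).symm⟩

lemma nonempty_truncLE_obj_iso_unshiftedHomology (n : ℤ) (X : C) [t.IsGE X n] :
    Nonempty ((t.truncLE n).obj X ≅ (unshiftedHomology t n).obj X) :=
  ⟨(t.truncLE n).mapIso (asIso ((t.truncGEπ n).app X))⟩

lemma nonempty_unshiftedHomology_truncGE_obj_iso (X : C) {a n : ℤ} (h : a ≤ n) :
    Nonempty ((unshiftedHomology t n).obj ((t.truncGE a).obj X) ≅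
      (unshiftedHomology t n).obj X) := by
  have hX := t.triangleLEGE_distinguished (a - 1) a (sub_add_cancel a 1) X
  have : IsIso ((unshiftedHomology t n).map ((t.truncGEπ a).app X)) :=
    isIso_unshiftedHomology_map_of_isLE t hX (sub_add_cancel n 1)
      (t.isLE_of_le ((t.truncLE (a - 1)).obj X) (a - 1) (n - 1))
  let e : (unshiftedHomology t n).obj X ≅ (unshiftedHomology t n).obj ((t.truncGE a).obj X) :=
    asIso ((unshiftedHomology t n).map ((t.truncGEπ a).app X))
  exact ⟨e.symm⟩

lemma heartP_shift_iff (X : C) (a : ℤ) : heartP t (X⟦a⟧) ↔ t.IsLE X a ∧ t.IsGE X a := by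
  rw [← t.isLE_shift_iff X a a 0, ← t.isGE_shift_iff X a a 0]
  exact ⟨fun h => ⟨⟨h.1⟩, ⟨h.2⟩⟩, fun h => ⟨h.1.le, h.2.ge⟩⟩

end Truncation

section Shift

variable {C D E : Type*} [Category C] [HasZeroObject C] [Preadditive C] [HasShift C ℤ]
  [∀ n : ℤ, (shiftFunctor C n).Additive] [Pretriangulated C]
  [Category D] [HasZeroObject D] [Preadditive D] [HasShift D ℤ]
  [∀ n : ℤ, (shiftFunctor D n).Additive] [Pretriangulated D] [Category E] [HasShift E ℤ]
  (F : C ⥤ D ⥤ E) [∀ X, (F.obj X).CommShift ℤ] [∀ M, (F.flip.obj M).CommShift ℤ]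

/-- The isomorphism `F(X⟦a⟧, M⟦b⟧) ≅ F(X, M)⟦a + b⟧` for a bifunctor which commutes with the
shifts in each variable: the shift by `b` is taken out first, then the shift by `a`. -/
noncomputable def objShiftObjShiftIso (X : C) (M : D) (a b : ℤ) :
    (F.obj (X⟦a⟧)).obj (M⟦b⟧) ≅ ((F.obj X).obj M)⟦a + b⟧ :=
  ((F.obj (X⟦a⟧)).commShiftIso b).app M ≪≫
    (shiftFunctor E b).mapIso (((F.flip.obj M).commShiftIso a).app X) ≪≫
    (shiftAdd ((F.obj X).obj M) a b).symm

lemma nonempty_obj_homologyObj_obj_homologyObj_iso (t₁ : TStructure C) (t₂ : TStructure D)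
    {p q n : ℤ} (h : p + q = n) (X : C) (M : D) :
    Nonempty ((F.obj (homologyObj t₁ p X)).obj (homologyObj t₂ q M) ≅
      ((F.obj ((unshiftedHomology t₁ p).obj X)).obj ((unshiftedHomology t₂ q).obj M))⟦n⟧) := by
  subst h
  obtain ⟨e₁⟩ := nonempty_homologyObj_iso t₁ p X
  obtain ⟨e₂⟩ := nonempty_homologyObj_iso t₂ q M
  exact ⟨(F.flip.obj _).mapIso e₁ ≪≫ (F.obj _).mapIso e₂ ≪≫ objShiftObjShiftIso F _ _ p q⟩

end Shift

section Bifunctor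

variable {C D E : Type*} [Category C] [HasZeroObject C] [Preadditive C] [HasShift C ℤ]
  [∀ n : ℤ, (shiftFunctor C n).Additive] [Pretriangulated C]
  [Category D] [HasZeroObject D] [Preadditive D] [HasShift D ℤ]
  [∀ n : ℤ, (shiftFunctor D n).Additive] [Pretriangulated D]
  [Category E] [HasZeroObject E] [Preadditive E] [HasShift E ℤ]
  [∀ n : ℤ, (shiftFunctor E n).Additive] [Pretriangulated E]

lemma isLE_obj_of_isLE (G : C ⥤ E) [G.CommShift ℤ] [G.IsTriangulated] {t : TStructure C}
    {t' : TStructure E} {a b c : ℤ}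
    (h : ∀ X n, n ≤ b → t.IsGE X n → t.IsLE X n → t'.IsLE (G.obj X) c)
    (X : C) (hX : t.IsGE X a) (hX' : t.IsLE X b) : t'.IsLE (G.obj X) c :=
  devissage t (P := fun Y => t'.IsLE (G.obj Y) c)
    (fun _ hY => t'.isLE_of_isZero (G.map_isZero hY) c)
    (fun A hA => t'.isLE₂ _ (G.map_distinguished A hA) c) (fun Y n _ => h Y n) X hX hX'

lemma isGE_obj_of_isGE (G : C ⥤ E) [G.CommShift ℤ] [G.IsTriangulated] {t : TStructure C}
    {t' : TStructure E} {a b c : ℤ}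
    (h : ∀ X n, a ≤ n → t.IsGE X n → t.IsLE X n → t'.IsGE (G.obj X) c)
    (X : C) (hX : t.IsGE X a) (hX' : t.IsLE X b) : t'.IsGE (G.obj X) c :=
  devissage t (P := fun Y => t'.IsGE (G.obj Y) c)
    (fun _ hY => t'.isGE_of_isZero (G.map_isZero hY) c)
    (fun A hA => t'.isGE₂ _ (G.map_distinguished A hA) c) (fun Y n hn _ => h Y n hn) X hX hX'

/-- A bifunctor is t-biexact if it is compatible with amplitudes: a product of objects
in degrees `≤ a` and `≤ b` lies in degrees `≤ a + b`, and likewise for `≥`. -/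
structure IsTBiexact (F : C ⥤ D ⥤ E) (t₁ : TStructure C) (t₂ : TStructure D)
    (t₃ : TStructure E) : Prop where
  isLE_obj_obj {X : C} {M : D} {a b : ℤ} (hX : t₁.IsLE X a) (hM : t₂.IsLE M b) :
    t₃.IsLE ((F.obj X).obj M) (a + b)
  isGE_obj_obj {X : C} {M : D} {a b : ℤ} (hX : t₁.IsGE X a) (hM : t₂.IsGE M b) :
    t₃.IsGE ((F.obj X).obj M) (a + b)

variable {F : C ⥤ D ⥤ E} {t₁ : TStructure C} {t₂ : TStructure D} {t₃ : TStructure E}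

namespace IsTBiexact

lemma flip (hF : IsTBiexact F t₁ t₂ t₃) : IsTBiexact F.flip t₂ t₁ t₃ where
  isLE_obj_obj {_ _ b a} hM hX := add_comm a b ▸ hF.isLE_obj_obj hX hM
  isGE_obj_obj {_ _ b a} hM hX := add_comm a b ▸ hF.isGE_obj_obj hX hM

lemma isIso_unshiftedHomology_map_truncGEπ (hF : IsTBiexact F t₁ t₂ t₃) {A : C}
    [(F.obj A).CommShift ℤ] [(F.obj A).IsTriangulated] {a q n : ℤ} (h : a + q = n)
    (hA : t₁.IsLE A a) (M : D) :
    IsIso ((unshiftedHomology t₃ n).map ((F.obj A).map ((t₂.truncGEπ q).app M))) :=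
  isIso_unshiftedHomology_map_of_isLE t₃ (n₀ := a + (q - 1))
    ((F.obj A).map_distinguished _ (t₂.triangleLEGE_distinguished (q - 1) q (sub_add_cancel q 1) M))
    (by lia) (hF.isLE_obj_obj hA (inferInstanceAs (t₂.IsLE ((t₂.truncLE (q - 1)).obj M) (q - 1))))

lemma isIso_unshiftedHomology_map_truncLEι (hF : IsTBiexact F t₁ t₂ t₃) {A : C}
    [(F.obj A).CommShift ℤ] [(F.obj A).IsTriangulated] {a q n : ℤ} (h : a + q = n)
    (hA : t₁.IsGE A a) (M : D) :
    IsIso ((unshiftedHomology t₃ n).map ((F.obj A).map ((t₂.truncLEι q).app M))) :=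
  isIso_unshiftedHomology_map_of_isGE t₃ (n₁ := a + (q + 1))
    ((F.obj A).map_distinguished _ (t₂.triangleLEGE_distinguished q (q + 1) rfl M))
    (by lia) (hF.isGE_obj_obj hA (inferInstanceAs (t₂.IsGE ((t₂.truncGE (q + 1)).obj M) (q + 1))))

lemma nonempty_unshiftedHomology_obj_obj_iso (hF : IsTBiexact F t₁ t₂ t₃) {A : C}
    [(F.obj A).CommShift ℤ] [(F.obj A).IsTriangulated] {a q n : ℤ} (h : a + q = n)
    (hA : t₁.IsGE A a) (hA' : t₁.IsLE A a) (M : D) :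
    Nonempty ((unshiftedHomology t₃ n).obj ((F.obj A).obj M) ≅
      (F.obj A).obj ((unshiftedHomology t₂ q).obj M)) := by
  let π : M ⟶ (t₂.truncGE q).obj M := (t₂.truncGEπ q).app M
  let ι : (unshiftedHomology t₂ q).obj M ⟶ (t₂.truncGE q).obj M := (t₂.truncLEι q).app _
  have : IsIso ((unshiftedHomology t₃ n).map ((F.obj A).map π)) :=
    hF.isIso_unshiftedHomology_map_truncGEπ h hA' M
  have : IsIso ((unshiftedHomology t₃ n).map ((F.obj A).map ι)) :=
    hF.isIso_unshiftedHomology_map_truncLEι h hA _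
  have : t₃.IsGE ((F.obj A).obj ((unshiftedHomology t₂ q).obj M)) n :=
    h ▸ hF.isGE_obj_obj hA inferInstance
  have : t₃.IsLE ((F.obj A).obj ((unshiftedHomology t₂ q).obj M)) n :=
    h ▸ hF.isLE_obj_obj hA' inferInstance
  obtain ⟨e⟩ := nonempty_unshiftedHomology_obj_iso t₃ n
    ((F.obj A).obj ((unshiftedHomology t₂ q).obj M))
  exact ⟨asIso ((unshiftedHomology t₃ n).map ((F.obj A).map π)) ≪≫
    (asIso ((unshiftedHomology t₃ n).map ((F.obj A).map ι))).symm ≪≫ e⟩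

end IsTBiexact

variable [∀ X, (F.obj X).CommShift ℤ] [∀ M, (F.flip.obj M).CommShift ℤ]

lemma isLE_and_isGE_obj_obj_of_heartP
    (hF : ∀ X M, heartP t₁ X → heartP t₂ M → heartP t₃ ((F.obj X).obj M))
    {X : C} {M : D} {a b : ℤ} (hX : t₁.IsLE X a ∧ t₁.IsGE X a) (hM : t₂.IsLE M b ∧ t₂.IsGE M b) :
    t₃.IsLE ((F.obj X).obj M) (a + b) ∧ t₃.IsGE ((F.obj X).obj M) (a + b) := by
  rw [← heartP_shift_iff] at hX hM ⊢
  have h := hF _ _ hX hM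
  let e := objShiftObjShiftIso F X M a b
  exact ⟨(t₃.le 0).prop_of_iso e h.1, (t₃.ge 0).prop_of_iso e h.2⟩

variable [∀ X, (F.obj X).IsTriangulated] [∀ M, (F.flip.obj M).IsTriangulated]

lemma isTBiexact_of_heartP (h₁ : tBounded t₁) (h₂ : tBounded t₂)
    (hF : ∀ X M, heartP t₁ X → heartP t₂ M → heartP t₃ ((F.obj X).obj M)) :
    IsTBiexact F t₁ t₂ t₃ where
  isLE_obj_obj {X M a b} hX hM := by
    obtain ⟨a', hX'⟩ := h₁.2 X
    obtain ⟨b', hM'⟩ := h₂.2 M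
    refine isLE_obj_of_isLE (F.flip.obj M) (fun Y n hn hY hY' => ?_) X ⟨hX'⟩ hX
    refine isLE_obj_of_isLE (F.obj Y) (fun N m hm hN hN' => ?_) M ⟨hM'⟩ hM
    have := (isLE_and_isGE_obj_obj_of_heartP hF ⟨hY', hY⟩ ⟨hN', hN⟩).1
    exact t₃.isLE_of_le _ (n + m) (a + b)
  isGE_obj_obj {X M a b} hX hM := by
    obtain ⟨a', hX'⟩ := h₁.1 X
    obtain ⟨b', hM'⟩ := h₂.1 M
    refine isGE_obj_of_isGE (F.flip.obj M) (fun Y n hn hY hY' => ?_) X hX ⟨hX'⟩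
    refine isGE_obj_of_isGE (F.obj Y) (fun N m hm hN hN' => ?_) M hM ⟨hM'⟩
    have := (isLE_and_isGE_obj_obj_of_heartP hF ⟨hY', hY⟩ ⟨hN', hN⟩).2
    exact t₃.isGE_of_ge _ (a + b) (n + m)

namespace IsTBiexact

lemma isIso_unshiftedHomology_map_truncLEι_comp_truncGEπ (hF : IsTBiexact F t₁ t₂ t₃)
    {a q n : ℤ} (h : a + q = n) (X : C) (M : D) :
    IsIso ((unshiftedHomology t₃ n).map
      ((F.map ((t₁.truncLEι a).app X)).app M ≫ (F.obj X).map ((t₂.truncGEπ q).app M))) := by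
  let i : (t₁.truncLE a).obj X ⟶ X := (t₁.truncLEι a).app X
  let r : M ⟶ (t₂.truncGE q).obj M := (t₂.truncGEπ q).app M
  have : IsIso ((unshiftedHomology t₃ n).map ((F.obj ((t₁.truncLE a).obj X)).map r)) :=
    hF.isIso_unshiftedHomology_map_truncGEπ h inferInstance M
  have : IsIso ((unshiftedHomology t₃ n).map ((F.map i).app ((t₂.truncGE q).obj M))) :=
    hF.flip.isIso_unshiftedHomology_map_truncLEι (add_comm a q ▸ h)
      (inferInstanceAs (t₂.IsGE ((t₂.truncGE q).obj M) q)) X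
  have hnat := (F.map i).naturality r
  change IsIso ((unshiftedHomology t₃ n).map ((F.map i).app M ≫ (F.obj X).map r))
  rw [← hnat, Functor.map_comp]
  infer_instance

lemma nonempty_unshiftedHomology_obj_truncLE_iso (hF : IsTBiexact F t₁ t₂ t₃) {a q n : ℤ}
    (h : a + q + 1 = n) (X : C) (M : D) :
    Nonempty ((unshiftedHomology t₃ n).obj ((F.obj X).obj ((t₂.truncLE q).obj M)) ≅
      (unshiftedHomology t₃ n).obj ((F.obj ((t₁.truncGE (a + 1)).obj X)).obj M)) := by
  let p : X ⟶ (t₁.truncGE (a + 1)).obj X := (t₁.truncGEπ (a + 1)).app X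
  let j : (t₂.truncLE q).obj M ⟶ M := (t₂.truncLEι q).app M
  have : IsIso ((unshiftedHomology t₃ n).map ((F.map p).app ((t₂.truncLE q).obj M))) :=
    hF.flip.isIso_unshiftedHomology_map_truncGEπ (a := q) (by lia) inferInstance X
  have : IsIso ((unshiftedHomology t₃ n).map ((F.obj ((t₁.truncGE (a + 1)).obj X)).map j)) :=
    hF.isIso_unshiftedHomology_map_truncLEι (a := a + 1) (by lia)
      (inferInstanceAs (t₁.IsGE ((t₁.truncGE (a + 1)).obj X) (a + 1))) M
  exact ⟨asIso ((unshiftedHomology t₃ n).map ((F.map p).app ((t₂.truncLE q).obj M))) ≪≫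
    asIso ((unshiftedHomology t₃ n).map ((F.obj ((t₁.truncGE (a + 1)).obj X)).map j))⟩

lemma nonempty_unshiftedHomology_obj_obj_iso_biprod (hF : IsTBiexact F t₁ t₂ t₃) {X : C}
    {a q n : ℤ} (h : a + q = n) (hX : t₁.IsGE X a) (M : D) :
    Nonempty ((unshiftedHomology t₃ n).obj ((F.obj X).obj M) ≅
      (unshiftedHomology t₃ n).obj ((F.obj ((t₁.truncGE (a + 1)).obj X)).obj M) ⊞
        (unshiftedHomology t₃ n).obj ((F.obj ((t₁.truncLE a).obj X)).obj M)) := by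
  have hT := (F.obj X).map_distinguished _
    (t₂.triangleLEGE_distinguished (q - 1) q (sub_add_cancel q 1) M)
  have hG : t₃.IsGE ((F.obj X).obj ((t₂.truncGE q).obj M)) n :=
    h ▸ hF.isGE_obj_obj hX (inferInstanceAs (t₂.IsGE ((t₂.truncGE q).obj M) q))
  obtain ⟨e⟩ := nonempty_unshiftedHomology_obj₂_iso_biprod t₃ hT hG
    ((F.map ((t₁.truncLEι a).app X)).app M)
    (hF.isIso_unshiftedHomology_map_truncLEι_comp_truncGEπ h X M)
  obtain ⟨e'⟩ := hF.nonempty_unshiftedHomology_obj_truncLE_iso (a := a) (q := q - 1) (n := n)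
    (by lia) X M
  exact ⟨e ≪≫ biprod.mapIso e' (Iso.refl _)⟩

lemma nonempty_unshiftedHomology_obj_biproduct_iso (hF : IsTBiexact F t₁ t₂ t₃) (M : D)
    (n : ℤ) {b : ℤ} :
    ∀ (a : ℤ) (X : C), t₁.IsGE X a → t₁.IsLE X b →
      Nonempty ((unshiftedHomology t₃ n).obj ((F.obj X).obj M) ≅
        ⨁ fun p : Finset.Icc a b => (F.obj ((unshiftedHomology t₁ p).obj X)).obj
          ((unshiftedHomology t₂ (n - p)).obj M)) := by
  refine amplitude_induction t₁ (fun a X hX => ⟨IsZero.iso ?_ ?_⟩) fun a X hab hX _ ⟨e⟩ => ?_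
  · exact (unshiftedHomology t₃ n).map_isZero ((F.flip.obj M).map_isZero hX)
  · exact isZero_biproduct fun p =>
      (F.flip.obj _).map_isZero ((unshiftedHomology t₁ p).map_isZero hX)
  · have hA : t₁.IsGE ((t₁.truncLE a).obj X) a := isGE_truncLE_obj t₁ X (by lia)
    obtain ⟨e₀⟩ := hF.nonempty_unshiftedHomology_obj_obj_iso_biprod (add_sub_cancel a n) hX M
    obtain ⟨e₁⟩ := hF.nonempty_unshiftedHomology_obj_obj_iso (add_sub_cancel a n)
      hA inferInstance M
    obtain ⟨e₂⟩ := nonempty_truncLE_obj_iso_unshiftedHomology t₁ a X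
    obtain ⟨e₃⟩ := nonempty_biproduct_Icc_iso hab fun p =>
      (F.obj ((unshiftedHomology t₁ p).obj X)).obj ((unshiftedHomology t₂ (n - p)).obj M)
    let e₄ (p : Finset.Icc (a + 1) b) :=
      (nonempty_unshiftedHomology_truncGE_obj_iso t₁ X (Finset.mem_Icc.1 p.2).1).some
    exact ⟨e₀ ≪≫ biprod.braiding _ _ ≪≫ biprod.mapIso
      (e₁ ≪≫ (F.flip.obj _).mapIso e₂)
      (e ≪≫ biproduct.mapIso fun p => (F.flip.obj _).mapIso (e₄ p)) ≪≫ e₃.symm⟩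

lemma nonempty_homologyObj_biproduct_iso (hF : IsTBiexact F t₁ t₂ t₃)
    {a b : ℤ} (X : C) (hX : t₁.IsGE X a) (hX' : t₁.IsLE X b) (M : D) (n : ℤ) :
    Nonempty (homologyObj t₃ n ((F.obj X).obj M) ≅ ⨁ fun p : Finset.Icc a b =>
      (F.obj (homologyObj t₁ p X)).obj (homologyObj t₂ (n - p) M)) := by
  obtain ⟨e⟩ := nonempty_homologyObj_iso t₃ n ((F.obj X).obj M)
  obtain ⟨e'⟩ := hF.nonempty_unshiftedHomology_obj_biproduct_iso M n a X hX hX'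
  let i (p : Finset.Icc a b) := (nonempty_obj_homologyObj_obj_homologyObj_iso F t₁ t₂
    (add_sub_cancel p.1 n) X M).some
  exact ⟨e ≪≫ (shiftFunctor E n).mapIso e' ≪≫ (shiftFunctor E n).mapBiproduct _ ≪≫
    biproduct.mapIso fun p => (i p).symm⟩

end IsTBiexact

end Bifunctor

end DerivedModule

theorem kunneth_formula_triangulatedModule_general
    {C D E : Type*} [Category C] [HasZeroObject C] [Preadditive C] [HasShift C ℤ]
    [∀ n : ℤ, (shiftFunctor C n).Additive] [Pretriangulated C]
    [Category D] [HasZeroObject D] [Preadditive D] [HasShift D ℤ]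
    [∀ n : ℤ, (shiftFunctor D n).Additive] [Pretriangulated D]
    [Category E] [HasZeroObject E] [Preadditive E] [HasShift E ℤ]
    [∀ n : ℤ, (shiftFunctor E n).Additive] [Pretriangulated E]
    {F : C ⥤ D ⥤ E} [∀ X, (F.obj X).CommShift ℤ] [∀ M, (F.flip.obj M).CommShift ℤ]
    [∀ X, (F.obj X).IsTriangulated] [∀ M, (F.flip.obj M).IsTriangulated]
    {t₁ : TStructure C} {t₂ : TStructure D} {t₃ : TStructure E}
    (hF : IsTBiexact F t₁ t₂ t₃) (X : C) (hX : ∃ b, t₁.le b X) (hX' : ∃ a, t₁.ge a X) (M : D)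
    (n : ℤ) :
    ∃ S : Finset (ℤ × ℤ), (∀ p ∈ S, p.1 + p.2 = n) ∧
      (∀ p q : ℤ, p + q = n → (p, q) ∉ S →
        IsZero ((F.obj (homologyObj t₁ p X)).obj (homologyObj t₂ q M))) ∧
      Nonempty (homologyObj t₃ n ((F.obj X).obj M) ≅
        ⨁ fun s : S => (F.obj (homologyObj t₁ s.1.1 X)).obj (homologyObj t₂ s.1.2 M)) := by
  obtain ⟨b, hb⟩ := hX
  obtain ⟨a, ha⟩ := hX'
  have : t₁.IsLE X b := ⟨hb⟩
  have : t₁.IsGE X a := ⟨ha⟩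
  let i : ℤ ↪ ℤ × ℤ := ⟨fun p => (p, n - p), fun _ _ h => congrArg Prod.fst h⟩
  obtain ⟨e⟩ := hF.nonempty_homologyObj_biproduct_iso X ‹_› ‹_› M n
  obtain ⟨e'⟩ := nonempty_biproduct_map_iso i (Finset.Icc a b)
    fun s => (F.obj (homologyObj t₁ s.1 X)).obj (homologyObj t₂ s.2 M)
  have hi (p : ℤ) : i p = (p, n - p) := rfl
  refine ⟨(Finset.Icc a b).map i, fun s hs => ?_, fun p q hpq hS => ?_, ⟨e ≪≫ e'⟩⟩
  · obtain ⟨p, -, rfl⟩ := Finset.mem_map.1 hs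
    exact add_sub_cancel p n
  · have hp : p ∉ Finset.Icc a b := fun hp => hS (by grind)
    exact (F.flip.obj _).map_isZero (isZero_homologyObj t₁ X hp)

/-- The Künneth formula
`H^n_{t'}(X ⊗ M) ≅ ⊕_{p+q=n} H^p_t(X) ⊗ H^q_{t'}(M)` for a compatible module product
bifunctor. -/
theorem kunneth_formula_triangulatedModule
    (T : Type*) [Category T] [HasZeroObject T] [Preadditive T] [HasShift T ℤ]
    [∀ n : ℤ, (shiftFunctor T n).Additive] [Pretriangulated T]
    [MonoidalCategory T] [MonoidalTriangulated T]
    (K : Type*) [Category K] [HasZeroObject K] [Preadditive K] [HasShift K ℤ]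
    [∀ n : ℤ, (shiftFunctor K n).Additive] [Pretriangulated K]
    [HasFiniteBiproducts K]
    (tm : TriangulatedModuleStruct T K)
    (t : TStructure T) (t' : TStructure K)
    -- `t` is a bounded t-structure compatible with the tensor product of `T`
    (htb : tBounded t)
    (htcomp : ∀ X Y : T, heartP t X → heartP t Y → heartP t (X ⊗ Y))
    -- `t'` is a bounded t-structure on `K`
    (ht'b : tBounded t')
    -- the module product bifunctor is compatible with `t` and `t'`
    (hcomp : ∀ (X : T) (M : K), heartP t X → heartP t' M →
      heartP t' ((tm.act.obj X).obj M)) :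
    ∀ (X : T) (M : K) (n : ℤ), ∃ S : Finset (ℤ × ℤ),
      (∀ p ∈ S, p.1 + p.2 = n) ∧
      (∀ p q : ℤ, p + q = n → (p, q) ∉ S →
        Limits.IsZero ((tm.act.obj (homologyObj t p X)).obj (homologyObj t' q M))) ∧
      Nonempty (homologyObj t' n ((tm.act.obj X).obj M) ≅
        (⨁ fun s : S => (tm.act.obj (homologyObj t s.1.1 X)).obj
          (homologyObj t' s.1.2 M))) := by
  let := tm.commShift_obj
  let := tm.commShift_flip
  have := tm.triangulated_obj
  have := tm.triangulated_flip
  exact fun X M n => kunneth_formula_triangulatedModule_general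
    (isTBiexact_of_heartP htb ht'b hcomp) X (htb.1 X) (htb.2 X) M n
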